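/- Tweedie's formula for the Gaussian-corrupted diffusion frame (one-dimensional): let μ be a probability measure on ℝ with finite first moment (the law of the clean value X), let ᾱ ∈ (0, 1), and on the product probability space ℝ × ℝ with measure μ ⊗ (gaussianReal 0 1) set X(x, z) = x, Z(x, z) = z, and Y = √ᾱ·X + √(1−ᾱ)·Z. Define the marginal density p(y) = ∫ (2π(1−ᾱ))^{−1/2}·exp(−(y − √ᾱ·x)²/(2(1−ᾱ))) dμ(x). Then p is everywhere positive and differentiable on ℝ, and the conditional expectation of X given the σ-algebra generated by Y satisfies E[X | Y] = (Y + (1−ᾱ)·p'(Y)/p(Y)) / √ᾱ almost surely; that is, the Tweedie (posterior-mean) denoised estimate of the clean frame is obtained from the noisy frame and the score of its marginal density. -/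

import Mathlib

open MeasureTheory ProbabilityTheory

/-- Bayes formula: if `(X, Y)` has joint density `k` with respect to `μ.prod l`, then
`E[X | Y] = (∫ x, k (x, Y) * x ∂μ) / ∫ x, k (x, Y) ∂μ`. -/
theorem condExp_comap_ae_eq_of_map_prodMk_eq_withDensity {Ω : Type*} [MeasurableSpace Ω]
    {P : Measure Ω} [IsFiniteMeasure P] {μ l : Measure ℝ} [SFinite μ] [SFinite l]
    {X Y : Ω → ℝ} (hX : Measurable X) (hY : Measurable Y) (hXi : Integrable X P)
    {k : ℝ × ℝ → ℝ} (hk : Measurable k) (hk0 : ∀ q, 0 ≤ k q)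
    (hpos : ∀ y, 0 < ∫ x, k (x, y) ∂μ)
    (hlaw : P.map (fun ω => (X ω, Y ω)) =
      (μ.prod l).withDensity (fun q => ENNReal.ofReal (k q))) :
    P[X | MeasurableSpace.comap Y inferInstance]
      =ᵐ[P] fun ω => (∫ x, k (x, Y ω) * x ∂μ) / ∫ x, k (x, Y ω) ∂μ := by
  set m : ℝ → ℝ := fun y => (∫ x, k (x, y) * x ∂μ) / ∫ x, k (x, y) ∂μ with hm_def
  have hXY : Measurable fun ω => (X ω, Y ω) := hX.prodMk hY
  have hko : Measurable fun q => ENNReal.ofReal (k q) := hk.ennreal_ofReal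
  have hkt : ∀ q, (ENNReal.ofReal (k q)).toReal = k q := fun q => ENNReal.toReal_ofReal (hk0 q)
  have hm : Measurable m := by
    refine Measurable.div ?_ ?_
    · exact (StronglyMeasurable.integral_prod_left' (f := fun q : ℝ × ℝ => k q * q.1)
        (hk.mul measurable_fst).stronglyMeasurable).measurable
    · exact (StronglyMeasurable.integral_prod_left' (f := k) hk.stronglyMeasurable).measurable
  have integrable_iff {f : ℝ × ℝ → ℝ} (hf : Measurable f) :
      Integrable (fun ω => f (X ω, Y ω)) P ↔ Integrable (fun q => k q * f q) (μ.prod l) := by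
    have h := integrable_map_measure (μ := P) (f := fun ω => (X ω, Y ω)) (g := f)
      hf.aestronglyMeasurable hXY.aemeasurable
    rw [hlaw, integrable_withDensity_iff_integrable_smul' hko (by simp)] at h
    simpa only [hkt, smul_eq_mul, Function.comp_def] using h.symm
  have setIntegral_eq {f : ℝ × ℝ → ℝ} (hf : Measurable f) {B : Set ℝ} (hB : MeasurableSet B) :
      ∫ ω in Y ⁻¹' B, f (X ω, Y ω) ∂P = ∫ q, k q * f q ∂(μ.prod (l.restrict B)) := by
    have hB' : MeasurableSet (Set.univ ×ˢ B : Set (ℝ × ℝ)) := MeasurableSet.univ.prod hB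
    have h := setIntegral_map (μ := P) (g := fun ω => (X ω, Y ω)) (f := f) hB'
      hf.aestronglyMeasurable hXY.aemeasurable
    rw [hlaw, setIntegral_withDensity_eq_setIntegral_toReal_smul hko (by simp) _ hB',
      ← Measure.prod_restrict, Measure.restrict_univ] at h
    simpa [hkt, Set.mk_preimage_prod] using h.symm
  have hXk : Integrable (fun q : ℝ × ℝ => k q * q.1) (μ.prod l) :=
    (integrable_iff measurable_fst).1 hXi
  have hcancel (y : ℝ) : ∫ x, k (x, y) * m y ∂μ = ∫ x, k (x, y) * x ∂μ := by
    rw [integral_mul_const, hm_def, mul_div_cancel₀ _ (hpos y).ne']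
  have hmk : Integrable (fun q : ℝ × ℝ => k q * m q.2) (μ.prod l) := by
    have hmeas : Measurable fun q : ℝ × ℝ => k q * m q.2 := by fun_prop
    refine (integrable_prod_iff' hmeas.aestronglyMeasurable).2 ⟨.of_forall fun y =>
      (Integrable.of_integral_ne_zero (hpos y).ne').mul_const (m y), ?_⟩
    refine hXk.integral_prod_right.norm.congr (.of_forall fun y => ?_)
    simp only [norm_mul, integral_mul_const, ← hcancel y]
    simp [abs_of_nonneg (hk0 _), abs_of_pos (hpos y)]
  have hmY : Integrable (fun ω => m (Y ω)) P := (integrable_iff (hm.comp measurable_snd)).2 hmk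
  refine (ae_eq_condExp_of_forall_setIntegral_eq hY.comap_le hXi
    (fun _ _ _ => hmY.integrableOn) ?_ ?_).symm
  · rintro _ ⟨B, hB, rfl⟩ -
    have hle : μ.prod (l.restrict B) ≤ μ.prod l := by
      rw [← Measure.restrict_univ (μ := μ), Measure.prod_restrict, Measure.restrict_univ]
      exact Measure.restrict_le_self
    refine (setIntegral_eq (hm.comp measurable_snd) hB).trans
      (Eq.trans ?_ (setIntegral_eq measurable_fst hB).symm)
    rw [integral_prod_symm _ (hXk.mono_measure hle)]
    refine (integral_prod_symm _ (hmk.mono_measure hle)).trans ?_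
    exact integral_congr_ae (.of_forall hcancel)
  · exact (hm.comp (comap_measurable Y)).aestronglyMeasurable

theorem map_affine_prod_gaussianReal (μ : Measure ℝ) [SFinite μ] (a : ℝ) {b : ℝ} (hb : b ≠ 0) :
    (μ.prod (gaussianReal 0 1)).map (fun p => (p.1, a * p.1 + b * p.2)) =
      (μ.prod volume).withDensity
        (fun q => ENNReal.ofReal (gaussianPDFReal (a * q.1) (.mk (b ^ 2) (sq_nonneg b)) q.2)) := by
  have hv : NNReal.mk (b ^ 2) (sq_nonneg b) ≠ 0 := by
    rw [Ne, ← NNReal.coe_eq_zero]; exact pow_ne_zero 2 hb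
  have hk : Measurable fun q : ℝ × ℝ =>
      ENNReal.ofReal (gaussianPDFReal (a * q.1) (.mk (b ^ 2) (sq_nonneg b)) q.2) := by
    unfold gaussianPDFReal; fun_prop
  have hmap (x : ℝ) : (gaussianReal 0 1).map (fun z => a * x + b * z) =
      gaussianReal (a * x) (.mk (b ^ 2) (sq_nonneg b)) := by
    rw [← Function.comp_def (fun y => a * x + y) (fun z => b * z),
      ← Measure.map_map (by fun_prop) (by fun_prop), gaussianReal_map_const_mul,
      gaussianReal_map_const_add]
    simp
  refine Measure.ext_of_lintegral _ fun f hf => ?_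
  rw [lintegral_map hf (by fun_prop), lintegral_prod _ (by fun_prop),
    lintegral_withDensity_eq_lintegral_mul _ hk hf, lintegral_prod _ (by fun_prop)]
  refine lintegral_congr fun x => ?_
  rw [← lintegral_map (μ := gaussianReal 0 1) (f := fun y => f (x, y))
    (g := fun z => a * x + b * z) (by fun_prop) (by fun_prop), hmap,
    gaussianReal_of_var_ne_zero _ hv,
    lintegral_withDensity_eq_lintegral_mul _ (measurable_gaussianPDF _ _) (by fun_prop)]
  rfl

theorem gaussianPDFReal_le (m : ℝ) (v : NNReal) (y : ℝ) :
    gaussianPDFReal m v y ≤ (√(2 * Real.pi * v))⁻¹ := by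
  rw [gaussianPDFReal_def]
  refine mul_le_of_le_one_right (by positivity) (Real.exp_le_one_iff.2 ?_)
  rw [neg_div]
  exact neg_nonpos.2 (by positivity)

theorem hasDerivAt_gaussianPDFReal (m : ℝ) {v : NNReal} (y : ℝ) :
    HasDerivAt (gaussianPDFReal m v) (gaussianPDFReal m v y * (-(y - m) / v)) y := by
  rw [gaussianPDFReal_def]
  have h : HasDerivAt (fun y : ℝ => -(y - m) ^ 2 / (2 * v)) (-(y - m) / v) y := by
    refine ((((hasDerivAt_id' y).sub_const m).fun_pow 2).fun_neg.div_const
      (2 * (v : ℝ))).congr_deriv ?_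
    push_cast; ring
  exact (h.exp.const_mul (√(2 * Real.pi * v))⁻¹).congr_deriv (mul_assoc _ _ _).symm

theorem integrable_gaussianPDFReal_mean (μ : Measure ℝ) [IsFiniteMeasure μ] (a : ℝ) (v : NNReal)
    (y : ℝ) : Integrable (fun x => gaussianPDFReal (a * x) v y) μ := by
  refine Integrable.of_bound (C := (√(2 * Real.pi * v))⁻¹) ?_ (.of_forall fun x => ?_)
  · unfold gaussianPDFReal
    exact Measurable.aestronglyMeasurable (by fun_prop)
  · rw [Real.norm_of_nonneg (gaussianPDFReal_nonneg _ _ _)]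
    exact gaussianPDFReal_le _ _ _

theorem integrable_gaussianPDFReal_mean_mul {μ : Measure ℝ} {f : ℝ → ℝ} (hf : Integrable f μ)
    (a : ℝ) (v : NNReal) (y : ℝ) :
    Integrable (fun x => gaussianPDFReal (a * x) v y * f x) μ := by
  refine hf.bdd_mul (c := (√(2 * Real.pi * v))⁻¹) ?_ (.of_forall fun x => ?_)
  · unfold gaussianPDFReal
    exact Measurable.aestronglyMeasurable (by fun_prop)
  · rw [Real.norm_of_nonneg (gaussianPDFReal_nonneg _ _ _)]
    exact gaussianPDFReal_le _ _ _

theorem hasDerivAt_integral_gaussianPDFReal {μ : Measure ℝ} [IsFiniteMeasure μ]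
    (hμ : Integrable (fun x : ℝ => x) μ) (a : ℝ) (v : NNReal) (y : ℝ) :
    HasDerivAt (fun y => ∫ x, gaussianPDFReal (a * x) v y ∂μ)
      (∫ x, gaussianPDFReal (a * x) v y * (-(y - a * x) / v) ∂μ) y := by
  refine (hasDerivAt_integral_of_dominated_loc_of_deriv_le (Metric.ball_mem_nhds y one_pos)
    (F := fun y x => gaussianPDFReal (a * x) v y)
    (F' := fun y x => gaussianPDFReal (a * x) v y * (-(y - a * x) / v))
    (bound := fun x => (√(2 * Real.pi * v))⁻¹ * ((|y| + 1 + |a * x|) / v))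
    (.of_forall fun y => (integrable_gaussianPDFReal_mean μ a v y).aestronglyMeasurable)
    (integrable_gaussianPDFReal_mean μ a v y) ?_ (.of_forall fun x z hz => ?_) ?_
    (.of_forall fun x z _ => hasDerivAt_gaussianPDFReal (a * x) z)).2
  · unfold gaussianPDFReal
    exact Measurable.aestronglyMeasurable (by fun_prop)
  · rw [norm_mul, Real.norm_of_nonneg (gaussianPDFReal_nonneg _ _ _), norm_div, norm_neg,
      Real.norm_of_nonneg v.coe_nonneg]
    have hz' : |z - y| < 1 := by simpa [Real.dist_eq] using hz
    have h1 : ‖z - a * x‖ ≤ |y| + 1 + |a * x| := by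
      rw [Real.norm_eq_abs]
      have := abs_sub z (a * x)
      have := abs_sub_abs_le_abs_sub z y
      linarith
    gcongr
    exact gaussianPDFReal_le _ _ _
  · exact (((integrable_const _).add (hμ.const_mul a).abs).div_const _).const_mul _

/-- Tweedie's formula for the Gaussian-corrupted diffusion frame (1D): with
clean value `X ~ μ` (finite first moment), `Y = √ᾱ·X + √(1−ᾱ)·Z` for an
independent standard Gaussian `Z`, and marginal density
`p(y) = ∫ (2π(1−ᾱ))^{−1/2}·exp(−(y − √ᾱ·x)²/(2(1−ᾱ))) dμ(x)`, the density `p`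
is positive and differentiable, and the posterior mean of the clean value is
`E[X | Y] = (Y + (1−ᾱ)·p'(Y)/p(Y)) / √ᾱ` almost surely. -/
theorem tweedie_formula
    (μ : Measure ℝ) [IsProbabilityMeasure μ]
    (hμ : Integrable (fun x : ℝ => x) μ)
    (α : ℝ) (hα0 : 0 < α) (hα1 : α < 1) :
    let ν : Measure (ℝ × ℝ) := μ.prod (gaussianReal 0 1)
    let X : ℝ × ℝ → ℝ := fun p => p.1
    let Y : ℝ × ℝ → ℝ := fun p =>
      Real.sqrt α * p.1 + Real.sqrt (1 - α) * p.2
    let pd : ℝ → ℝ := fun y =>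
      ∫ x, (2 * Real.pi * (1 - α)) ^ (-(1 : ℝ) / 2) *
        Real.exp (-(y - Real.sqrt α * x) ^ 2 / (2 * (1 - α))) ∂μ
    (∀ y : ℝ, 0 < pd y) ∧ Differentiable ℝ pd ∧
      ν[X | MeasurableSpace.comap Y inferInstance]
        =ᵐ[ν] fun p => (Y p + (1 - α) * deriv pd (Y p) / pd (Y p)) / Real.sqrt α := by
  intro ν X Y pd
  have hα : 0 < 1 - α := sub_pos.2 hα1
  set a := √α with ha_def
  have ha : 0 < a := Real.sqrt_pos.2 hα0
  have hb : √(1 - α) ≠ 0 := (Real.sqrt_pos.2 hα).ne'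
  set v : NNReal := .mk (√(1 - α) ^ 2) (sq_nonneg _) with hv_def
  have hv : (v : ℝ) = 1 - α := Real.sq_sqrt hα.le
  have hv0 : v ≠ 0 := by rw [Ne, ← NNReal.coe_eq_zero, hv]; exact hα.ne'
  have hpd : pd = fun y => ∫ x, gaussianPDFReal (a * x) v y ∂μ := by
    funext y
    refine integral_congr_ae (.of_forall fun x => ?_)
    simp only [gaussianPDFReal, hv]
    rw [neg_div (2 : ℝ) 1, Real.rpow_neg (by positivity), ← Real.sqrt_eq_rpow]
  have hpos (y : ℝ) : 0 < ∫ x, gaussianPDFReal (a * x) v y ∂μ := by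
    rw [integral_pos_iff_support_of_nonneg (fun x => gaussianPDFReal_nonneg _ _ _)
      (integrable_gaussianPDFReal_mean μ a v y), Function.support_eq_univ
      fun x => (gaussianPDFReal_pos _ _ _ hv0).ne']
    simp
  have hderiv := hasDerivAt_integral_gaussianPDFReal hμ a v
  have hscore (y : ℝ) : (∫ x, gaussianPDFReal (a * x) v y * x ∂μ) =
      (y * pd y + (1 - α) * deriv pd y) / a := by
    have hi := (integrable_gaussianPDFReal_mean μ a v y).const_mul y
    have hj := (integrable_gaussianPDFReal_mean_mul hμ a v y).const_mul a
    have hsplit : (1 - α) * deriv pd y = ∫ x, (a * (gaussianPDFReal (a * x) v y * x) -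
        y * gaussianPDFReal (a * x) v y) ∂μ := by
      rw [hpd, (hderiv y).deriv, ← integral_const_mul]
      refine integral_congr_ae (.of_forall fun x => ?_)
      simp only [hv]
      field_simp
      ring
    rw [hsplit, integral_sub hj hi, integral_const_mul, integral_const_mul, hpd]
    field_simp
    ring
  refine ⟨fun y => hpd ▸ hpos y, hpd ▸ fun y => (hderiv y).differentiableAt, ?_⟩
  have hk : Measurable fun q : ℝ × ℝ => gaussianPDFReal (a * q.1) v q.2 := by
    unfold gaussianPDFReal; fun_prop
  refine (condExp_comap_ae_eq_of_map_prodMk_eq_withDensity (P := ν) (X := X) (Y := Y)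
    measurable_fst (by fun_prop) (hμ.comp_fst _) hk
    (fun q => gaussianPDFReal_nonneg _ _ _) hpos
    (map_affine_prod_gaussianReal μ a hb)).trans (.of_forall fun p => ?_)
  have hp : pd (Y p) ≠ 0 := by rw [hpd]; exact (hpos _).ne'
  simp only [hscore]
  rw [← congrFun hpd (Y p)]
  field_simp
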